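/- arXiv:2502.00203 — 3 statements merged into one kernel-verified Lean document; each statement's English description precedes it below -/
import Mathlib

section
/- (RPO recovers DPO.) For every real number a, the limit as b → ∞ of the backward Bernoulli KL divergence σ(b)·log(σ(b)/σ(a)) + (1−σ(b))·log((1−σ(b))/(1−σ(a))) equals −log σ(a). That is, when the ground-truth reward margin tends to +∞, the RPO objective with the backward Bernoulli KL metric tends to the DPO loss −log σ(a) evaluated at the implicit reward margin a. -/
/-!
The divergence is `KL(p ‖ q) = p log (p / q) + (1 - p) log ((1 - p) / (1 - q))` at `p = σ(b)`,
`q = σ(a)`. Since `t ↦ t log t` extends continuously by `0` to `t = 0`, for fixed `q ∈ (0, 1)`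
the map `p ↦ KL(p ‖ q)` is continuous on all of `ℝ` (with the convention `log 0 = 0`), the
endpoint `p = 1` included. As `σ(b) → 1`, the divergence tends to `KL(1 ‖ q) = -log q`.
-/

/-- The sigmoid function σ(x) = 1/(1 + exp(−x)). -/
noncomputable def sigmoid (x : ℝ) : ℝ := 1 / (1 + Real.exp (-x))

lemma sigmoid_eq_real_sigmoid (x : ℝ) : sigmoid x = Real.sigmoid x := by
  rw [sigmoid, Real.sigmoid_def, one_div]

/-- Rescaling by `c` reduces `x log (x / c)` to the continuous function `t log t`. -/
lemma continuous_mul_log_div {c : ℝ} (hc : c ≠ 0) :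
    Continuous fun x : ℝ => x * Real.log (x / c) := by
  have h : (fun x : ℝ => x * Real.log (x / c)) =
      fun x : ℝ => c * (x / c * Real.log (x / c)) := by
    funext x
    rw [← mul_assoc, mul_div_cancel₀ _ hc]
  rw [h]
  exact continuous_const.mul (Real.continuous_mul_log.comp (continuous_id.div_const c))

/-- (RPO recovers DPO.) As the ground-truth reward margin b tends to +∞, the
backward Bernoulli KL divergence KL_ber(σ(b)‖σ(a)) tends to the DPO loss
−log σ(a) evaluated at the implicit reward margin a. -/
theorem rpo_bwd_tendsto_dpo (a : ℝ) :
    Filter.Tendsto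
      (fun b : ℝ =>
        sigmoid b * Real.log (sigmoid b / sigmoid a) +
          (1 - sigmoid b) * Real.log ((1 - sigmoid b) / (1 - sigmoid a)))
      Filter.atTop (nhds (-Real.log (sigmoid a))) := by
  simp only [sigmoid_eq_real_sigmoid]
  have hq : Real.sigmoid a ≠ 0 := (Real.sigmoid_pos a).ne'
  have hq' : 1 - Real.sigmoid a ≠ 0 := (sub_pos.mpr (Real.sigmoid_lt_one a)).ne'
  have hcont : Continuous fun p : ℝ => p * Real.log (p / Real.sigmoid a) +
      (1 - p) * Real.log ((1 - p) / (1 - Real.sigmoid a)) :=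
    (continuous_mul_log_div hq).add
      ((continuous_mul_log_div hq').comp (continuous_const.sub continuous_id))
  have hlim := (hcont.tendsto 1).comp Real.tendsto_sigmoid_atTop
  simpa [Function.comp_def] using hlim
end

section
/- (Gradient of the squared Leave-One-Out metric.) Let K ≥ 2 be a natural number, a, b : Fin K → ℝ, and k : Fin K. Then the function t ↦ D^sqloo(Function.update a k t, b) is differentiable at t = a_k with derivative (K/(K−1))·(â_k − b̂_k), where ·̂ is the leave-one-out centering. -/
/-!
Write `S = ∑ j, a j`. Since `∑_{j ≠ i} a j = S - a i`, leave-one-out centering is the rescaled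
mean-centering `â_i = (K a_i - S) / (K - 1)` (`looCenter_eq`). Two facts follow: centered vectors
sum to zero (`sum_looCenter`), and moving `a_k` to `t` shifts `â_i` by
`(t - a_k) (K δ_{ik} - 1) / (K - 1)` (`looCenter_update`). By the chain rule the derivative is
`∑ i, (â_i - b̂_i) (K δ_{ik} - 1) / (K - 1)`; the constant part `-1 / (K - 1)` is paired with a
vector of sum zero, so only `K / (K - 1) * (â_k - b̂_k)` survives.
-/

open Finset

/-- Leave-one-out centering: â_k = a_k − (1/(K−1))·∑_{j≠k} a_j. -/
noncomputable def looCenter {K : ℕ} (a : Fin K → ℝ) (k : Fin K) : ℝ :=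
  a k - (1 / ((K : ℝ) - 1)) * ∑ j ∈ Finset.univ.erase k, a j

/-- The squared distance with Leave-One-Out:
D^sqloo(a,b) = (1/2)·∑_k (â_k − b̂_k)². -/
noncomputable def Dsqloo {K : ℕ} (a b : Fin K → ℝ) : ℝ :=
  (1 / 2) * ∑ k, (looCenter a k - looCenter b k) ^ 2

lemma looCenter_eq {K : ℕ} (hK : 2 ≤ K) (a : Fin K → ℝ) (i : Fin K) :
    looCenter a i = (K * a i - ∑ j, a j) / ((K : ℝ) - 1) := by
  have h2 : (2 : ℝ) ≤ K := by exact_mod_cast hK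
  have hne : (K : ℝ) - 1 ≠ 0 := by linarith
  have hs := Finset.add_sum_erase Finset.univ a (Finset.mem_univ i)
  rw [looCenter, ← hs]
  field_simp
  ring

lemma sum_looCenter {K : ℕ} (hK : 2 ≤ K) (a : Fin K → ℝ) : ∑ i, looCenter a i = 0 := by
  simp_rw [looCenter_eq hK]
  rw [← Finset.sum_div, Finset.sum_sub_distrib, ← Finset.mul_sum]
  simp

lemma looCenter_update {K : ℕ} (hK : 2 ≤ K) (a : Fin K → ℝ) (k i : Fin K) (t : ℝ) :
    looCenter (Function.update a k t) i =
      looCenter a i + (t - a k) * (((if i = k then (K : ℝ) else 0) - 1) / ((K : ℝ) - 1)) := by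
  have hs : ∑ j, Function.update a k t j = ∑ j, a j + (t - a k) := by
    rw [Finset.sum_update_of_mem (Finset.mem_univ k),
      ← Finset.add_sum_erase Finset.univ a (Finset.mem_univ k), Finset.sdiff_singleton_eq_erase]
    ring
  rw [looCenter_eq hK, looCenter_eq hK, hs]
  by_cases h : i = k
  · subst h
    simp only [Function.update_self, if_true]
    ring
  · simp only [Function.update_of_ne h, if_neg h]
    ring

/-- (Gradient of the squared Leave-One-Out metric.) The function
t ↦ D^sqloo(Function.update a k t, b) has derivative
(K/(K−1))·(â_k − b̂_k) at t = a_k. -/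
theorem hasDerivAt_Dsqloo {K : ℕ} (hK : 2 ≤ K) (a b : Fin K → ℝ) (k : Fin K) :
    HasDerivAt (fun t => Dsqloo (Function.update a k t) b)
      (((K : ℝ) / ((K : ℝ) - 1)) * (looCenter a k - looCenter b k)) (a k) := by
  have hcoord (i : Fin K) : HasDerivAt
      (fun t => (looCenter (Function.update a k t) i - looCenter b i) ^ 2)
      (2 * (looCenter a i - looCenter b i) *
        (((if i = k then (K : ℝ) else 0) - 1) / ((K : ℝ) - 1))) (a k) := by
    simp_rw [looCenter_update hK]
    have h := (((((hasDerivAt_id (a k)).sub_const (a k)).mul_const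
      (((if i = k then (K : ℝ) else 0) - 1) / ((K : ℝ) - 1))).const_add
      (looCenter a i)).sub_const (looCenter b i)).pow 2
    refine h.congr_deriv ?_
    simp
  have hsum := (HasDerivAt.fun_sum (u := Finset.univ) fun i _ => hcoord i).const_mul (1 / 2 : ℝ)
  have h0 : ∑ i, (looCenter a i - looCenter b i) = 0 := by
    rw [Finset.sum_sub_distrib, sum_looCenter hK, sum_looCenter hK, sub_zero]
  unfold Dsqloo
  refine hsum.congr_deriv ?_
  have hsplit (i : Fin K) : 2 * (looCenter a i - looCenter b i) *
        (((if i = k then (K : ℝ) else 0) - 1) / ((K : ℝ) - 1)) =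
      (if i = k then 2 * (K / ((K : ℝ) - 1)) * (looCenter a i - looCenter b i) else 0) -
        2 / ((K : ℝ) - 1) * (looCenter a i - looCenter b i) := by
    split_ifs <;> ring
  simp_rw [hsplit]
  rw [Finset.sum_sub_distrib, ← Finset.mul_sum, h0, Finset.sum_ite_eq' Finset.univ k]
  simp only [Finset.mem_univ, if_true]
  ring
end

section
/- (The optimal policy represents the reward as an implicit reward model.) Let Y be a nonempty finite type, π_ref : Y → ℝ with π_ref(y) > 0 for all y and ∑_y π_ref(y) = 1, r : Y → ℝ, and β > 0. Let Z = ∑_y π_ref(y)·exp(r(y)/β) and π*(y) = π_ref(y)·exp(r(y)/β)/Z. Then for every y : Y, β·log(π*(y)/π_ref(y)) + β·log Z = r(y); consequently for all y₁, y₂ : Y, the implicit reward margin satisfies β·(log(π*(y₁)/π_ref(y₁)) − log(π*(y₂)/π_ref(y₂))) = r(y₁) − r(y₂), independently of the partition function Z. -/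
/-!
Since `πref` and `exp` are positive and `Y` is nonempty, `Z > 0`. The factor `πref y` cancels in
the likelihood ratio, so its logarithm is `r y / β - log Z`. Multiplying by `β` gives the
representation of the reward, and `log Z` cancels in the difference of two such logarithms.
-/

open Finset

/-- (The optimal policy represents the reward as an implicit reward model.)
For the Gibbs policy π*(y) = π_ref(y)·exp(r(y)/β)/Z with
Z = ∑_y π_ref(y)·exp(r(y)/β), one has β·log(π*(y)/π_ref(y)) + β·log Z = r(y) for
all y, and consequently the implicit reward margin
β·(log(π*(y₁)/π_ref(y₁)) − log(π*(y₂)/π_ref(y₂))) equals r(y₁) − r(y₂),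
independently of the partition function Z. -/
theorem gibbs_policy_implicit_reward
    {Y : Type*} [Fintype Y] [Nonempty Y]
    (πref : Y → ℝ) (hπref_pos : ∀ y, 0 < πref y) (hπref_sum : ∑ y, πref y = 1)
    (r : Y → ℝ) (β : ℝ) (hβ : 0 < β) :
    (∀ y : Y,
      β * Real.log ((πref y * Real.exp (r y / β) /
            ∑ y', πref y' * Real.exp (r y' / β)) / πref y) +
        β * Real.log (∑ y', πref y' * Real.exp (r y' / β)) = r y) ∧
    ∀ y₁ y₂ : Y,
      β * (Real.log ((πref y₁ * Real.exp (r y₁ / β) /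
              ∑ y', πref y' * Real.exp (r y' / β)) / πref y₁) -
           Real.log ((πref y₂ * Real.exp (r y₂ / β) /
              ∑ y', πref y' * Real.exp (r y' / β)) / πref y₂)) = r y₁ - r y₂ := by
  have hZ : 0 < ∑ y', πref y' * Real.exp (r y' / β) :=
    Finset.sum_pos (fun y _ => mul_pos (hπref_pos y) (Real.exp_pos _)) Finset.univ_nonempty
  -- Only the positivity of the partition function matters from here on.
  generalize ∑ y', πref y' * Real.exp (r y' / β) = Z at hZ ⊢
  have key : ∀ y : Y,
      Real.log ((πref y * Real.exp (r y / β) / Z) / πref y) = r y / β - Real.log Z := by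
    intro y
    have hy := (hπref_pos y).ne'
    have h : (πref y * Real.exp (r y / β) / Z) / πref y = Real.exp (r y / β) / Z := by
      field_simp
    rw [h, Real.log_div (Real.exp_ne_zero _) hZ.ne', Real.log_exp]
  refine ⟨fun y => ?_, fun y₁ y₂ => ?_⟩
  · rw [key]
    field_simp
    ring
  · rw [key, key]
    field_simp
    ring
end
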